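/- The normalized matrix of maximum out-forests annihilates the Laplacian matrix on both sides: L J̃ = J̃ L = 0. -/

import Mathlib

/-!
The heart of the proof is the recurrence `Q_{k+1} + Q_k L = σ_{k+1} I`, valid for every `k`
(`Qmat_succ`). Together with `Q_0 = I` it shows inductively that each `Q_k` is a polynomial in `L`,
so that `Q_k` commutes with `L`. At `k = maxArcs W` there are no out-forests with `k + 1` arcs,
hence `Q_{k+1} = 0` and `σ_{k+1} = 0`, and the recurrence reads `Q_k L = 0`; commutation gives
`L Q_k = 0` as well.

For the recurrence, fix `i` and `j` and write `[F : v]` for the indicator that `v` lies in the tree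
of `F` diverging from `i`. The `(i, j)` entry of `Q_k L` is the sum of
`w(F) W p j ([F : j] - [F : p])` over the forests `F` with `k` arcs and the vertices `p`.
An out-forest in which `j` is not a root is, in a unique way, `G + (q, j)` where `j` is a root of the
out-forest `G` and `q` is not reachable from `j` in `G` (`sum_nonroot`).

* The forests `F = G + (q, j)` in which `j` is not a root contribute zero: the term vanishes if `p`
  is reachable from `j` in `G`, and otherwise it equals
  `w(G) W q j W p j ([G : q] - [G : p])`, which is antisymmetric in `p` and `q`.
* The forests `G` in which `j` is a root contribute `w(G) W p j ([i = j] - [G + (p, j) : j])` when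
  `p` is not reachable from `j`, and zero otherwise. These terms recombine to the sum of
  `w(H) ([i = j] - [H : j])` over the forests `H` with `k + 1` arcs.
-/

open Matrix Finset

namespace ForestMatrix

variable {n : ℕ}

/-- Reachability from `i` to `j` within a finite set `F` of arcs. -/
def FReach (F : Finset (Fin n × Fin n)) (i j : Fin n) : Prop :=
  Relation.ReflTransGen (fun a b => (a, b) ∈ F) i j

/-- `F` is (the arc set of) a spanning diverging forest (out-forest) of the digraph whose
positive arc weights are recorded in `W`: all arcs of `F` are arcs of the digraph, every
vertex has indegree at most one, and there are no directed cycles. -/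
def IsOutForest (W : Matrix (Fin n) (Fin n) ℝ) (F : Finset (Fin n × Fin n)) : Prop :=
  (∀ e ∈ F, 0 < W e.1 e.2) ∧
  (∀ v : Fin n, ({e ∈ F | e.2 = v} : Finset (Fin n × Fin n)).card ≤ 1) ∧
  (∀ v : Fin n, ¬ Relation.TransGen (fun a b => (a, b) ∈ F) v v)

/-- The weight of a (sub)digraph: the product of its arc weights. -/
noncomputable def wt (W : Matrix (Fin n) (Fin n) ℝ) (F : Finset (Fin n × Fin n)) : ℝ :=
  ∏ e ∈ F, W e.1 e.2

/-- The weight of a set of digraphs: the sum of their weights. -/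
noncomputable def wtSet (W : Matrix (Fin n) (Fin n) ℝ)
    (G : Finset (Finset (Fin n × Fin n))) : ℝ :=
  ∑ F ∈ G, wt W F

open scoped Classical in
/-- The set of all out-forests of the digraph with weight matrix `W`. -/
noncomputable def allOutForests (W : Matrix (Fin n) (Fin n) ℝ) :
    Finset (Finset (Fin n × Fin n)) :=
  Finset.univ.filter (fun F => IsOutForest W F)

open scoped Classical in
/-- The set of all out-forests with `k` arcs. -/
noncomputable def outForests (W : Matrix (Fin n) (Fin n) ℝ) (k : ℕ) :
    Finset (Finset (Fin n × Fin n)) :=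
  Finset.univ.filter (fun F => IsOutForest W F ∧ F.card = k)

/-- The number of arcs of a maximum out-forest; it equals `n - d'` where `d'` is the
out-forest dimension. -/
noncomputable def maxArcs (W : Matrix (Fin n) (Fin n) ℝ) : ℕ :=
  (allOutForests W).sup Finset.card

/-- `σ_k`: the total weight of the out-forests with `k` arcs. -/
noncomputable def sigma (W : Matrix (Fin n) (Fin n) ℝ) (k : ℕ) : ℝ :=
  wtSet W (outForests W k)

/-- `j` belongs to the tree of the forest `F` diverging from `i`:
`i` is a root of `F` and `j` is reachable from `i` in `F`. -/
def inTreeOf (F : Finset (Fin n × Fin n)) (i j : Fin n) : Prop :=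
  (∀ e ∈ F, e.2 ≠ i) ∧ FReach F i j

open scoped Classical in
/-- `Q_k`: the matrix of out-forests with `k` arcs; its `(i,j)` entry is the total weight of
the out-forests with `k` arcs in which `j` belongs to a tree diverging from `i`. -/
noncomputable def Qmat (W : Matrix (Fin n) (Fin n) ℝ) (k : ℕ) :
    Matrix (Fin n) (Fin n) ℝ :=
  fun i j => wtSet W ((outForests W k).filter (fun F => inTreeOf F i j))

/-- The column Laplacian matrix of the digraph with weight matrix `W`. -/
noncomputable def Lap (W : Matrix (Fin n) (Fin n) ℝ) : Matrix (Fin n) (Fin n) ℝ :=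
  fun i j => if i = j then ∑ k ∈ Finset.univ.erase i, W k i else -W i j

/-- `σ(τ) = Σ_{k=0}^{n-d'} σ_k τ^k`. -/
noncomputable def sigmaTau (W : Matrix (Fin n) (Fin n) ℝ) (τ : ℝ) : ℝ :=
  ∑ k ∈ Finset.range (maxArcs W + 1), sigma W k * τ ^ k

/-- `Q(τ) = Σ_{k=0}^{n-d'} Q_k τ^k`. -/
noncomputable def QTau (W : Matrix (Fin n) (Fin n) ℝ) (τ : ℝ) :
    Matrix (Fin n) (Fin n) ℝ :=
  ∑ k ∈ Finset.range (maxArcs W + 1), τ ^ k • Qmat W k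

/-- `J(τ) = σ(τ)⁻¹ Q(τ)`. -/
noncomputable def JTau (W : Matrix (Fin n) (Fin n) ℝ) (τ : ℝ) :
    Matrix (Fin n) (Fin n) ℝ :=
  (sigmaTau W τ)⁻¹ • QTau W τ

/-- `J̃ = σ_{n-d'}⁻¹ Q_{n-d'}`: the normalized matrix of maximum out-forests. -/
noncomputable def Jtil (W : Matrix (Fin n) (Fin n) ℝ) : Matrix (Fin n) (Fin n) ℝ :=
  (sigma W (maxArcs W))⁻¹ • Qmat W (maxArcs W)

/-- Reachability in the digraph with weight matrix `W`. -/
def Reach (W : Matrix (Fin n) (Fin n) ℝ) (i j : Fin n) : Prop :=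
  Relation.ReflTransGen (fun a b => 0 < W a b) i j

/-- `K` is a source knot of the digraph: `K` is the vertex set of a bicomponent
(a maximal strongly connected subgraph) and no arc enters `K` from outside. -/
def IsSourceKnot (W : Matrix (Fin n) (Fin n) ℝ) (K : Finset (Fin n)) : Prop :=
  (∃ i, ∀ j, j ∈ K ↔ (Reach W i j ∧ Reach W j i)) ∧
  (∀ j k, k ∈ K → 0 < W j k → j ∈ K)

/-! ### Adding and removing one arc of an out-forest -/

section Forests

variable {W : Matrix (Fin n) (Fin n) ℝ} {F G : Finset (Fin n × Fin n)} {i j p q v : Fin n}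

/-- `j` has no incoming arc in `F`. -/
def IsRoot (F : Finset (Fin n × Fin n)) (j : Fin n) : Prop := ∀ e ∈ F, e.2 ≠ j

lemma IsOutForest.parent_unique (hF : IsOutForest W F) (hp : (p, v) ∈ F) (hq : (q, v) ∈ F) :
    p = q := by
  have h := Finset.card_le_one.1 (hF.2.1 v) (p, v) (by simpa using hp) (q, v) (by simpa using hq)
  exact congrArg Prod.fst h

lemma FReach.mono (h : F ⊆ G) (hr : FReach F i j) : FReach G i j :=
  Relation.ReflTransGen.mono (fun _ _ hab => h hab) _ _ hr

lemma inTreeOf_of_isRoot (hj : IsRoot F j) : inTreeOf F i j ↔ i = j := by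
  constructor
  · rintro ⟨_, h⟩
    rcases Relation.ReflTransGen.cases_tail h with h | ⟨c, _, hc⟩
    · exact h.symm
    · exact absurd rfl (hj _ hc)
  · rintro rfl
    exact ⟨hj, Relation.ReflTransGen.refl⟩

lemma IsOutForest.inTreeOf_arc (hF : IsOutForest W F) (hp : (p, j) ∈ F) :
    inTreeOf F i j ↔ inTreeOf F i p := by
  constructor
  · rintro ⟨hi, h⟩
    rcases Relation.ReflTransGen.cases_tail h with h | ⟨c, hc, hcj⟩
    · exact absurd h (hi _ hp)
    · rw [hF.parent_unique hp hcj]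
      exact ⟨hi, hc⟩
  · rintro ⟨hi, h⟩
    exact ⟨hi, Relation.ReflTransGen.tail h hp⟩

/-- A vertex and its descendants lie in the same tree. -/
lemma IsOutForest.inTreeOf_reach (hF : IsOutForest W F) (h : FReach F j v) :
    inTreeOf F i v ↔ inTreeOf F i j := by
  induction h with
  | refl => rfl
  | tail _ hbc ih => exact (hF.inTreeOf_arc hbc).trans ih

/-- If `q` is not a descendant of `j`, a path of `G + (q, j)` uses the new arc at most once. -/
lemma freach_insert (hq : ¬ FReach G j q) (h : FReach (insert (q, j) G) i v) :
    FReach G i v ∨ (FReach G i q ∧ FReach G j v) := by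
  induction h with
  | refl => exact Or.inl Relation.ReflTransGen.refl
  | tail _ hbc ih =>
    rcases Finset.mem_insert.1 hbc with h | h
    · obtain ⟨rfl, rfl⟩ := Prod.mk.inj h
      rcases ih with ih | ih
      · exact Or.inr ⟨ih, Relation.ReflTransGen.refl⟩
      · exact absurd ih.2 hq
    · exact ih.imp (fun h' => Relation.ReflTransGen.tail h' h)
        (fun h' => ⟨h'.1, Relation.ReflTransGen.tail h'.2 h⟩)

lemma IsOutForest.insert (hG : IsOutForest W G) (hj : IsRoot G j) (hq : ¬ FReach G j q)
    (hw : 0 < W q j) : IsOutForest W (insert (q, j) G) := by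
  refine ⟨?_, ?_, ?_⟩
  · intro e he
    rcases Finset.mem_insert.1 he with rfl | he
    · exact hw
    · exact hG.1 e he
  · intro v
    refine Finset.card_le_one.2 ?_
    rintro ⟨a, a'⟩ ha ⟨b, b'⟩ hb
    simp only [Finset.mem_filter, Finset.mem_insert, Prod.mk.injEq] at ha hb
    obtain ⟨ha, rfl⟩ := ha
    obtain ⟨hb, rfl⟩ := hb
    rcases ha with ⟨rfl, rfl⟩ | ha <;> rcases hb with ⟨rfl, hb⟩ | hb
    · rfl
    · exact absurd rfl (hj _ hb)
    · exact absurd hb (hj _ ha)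
    · rw [hG.parent_unique ha hb]
  · intro v hv
    obtain ⟨c, hvc, hcv⟩ := Relation.TransGen.tail'_iff.1 hv
    rcases Finset.mem_insert.1 hcv with h | h
    · obtain ⟨rfl, rfl⟩ := Prod.mk.inj h
      rcases freach_insert hq hvc with h | h
      · exact hq h
      · exact hq h.2
    · rcases freach_insert hq hvc with h' | h'
      · exact hG.2.2 v (Relation.TransGen.tail' h' h)
      · exact hq (Relation.ReflTransGen.trans (Relation.ReflTransGen.tail h'.2 h) h'.1)

lemma IsOutForest.subset (hF : IsOutForest W F) (h : G ⊆ F) : IsOutForest W G :=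
  ⟨fun e he => hF.1 e (h he),
   fun v => (Finset.card_le_card (Finset.filter_subset_filter _ h)).trans (hF.2.1 v),
   fun v hv => hF.2.2 v (Relation.TransGen.mono (fun _ _ hab => h hab) _ _ hv)⟩

/-- Adding `(q, j)` does not affect tree membership of the vertices that are not descendants
of `j`. -/
lemma inTreeOf_insert (hq : ¬ FReach G j q) (hv : ¬ FReach G j v) :
    inTreeOf (insert (q, j) G) i v ↔ inTreeOf G i v := by
  constructor
  · rintro ⟨hi, h⟩
    refine ⟨fun e he => hi e (Finset.mem_insert_of_mem he), ?_⟩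
    exact (freach_insert hq h).resolve_right fun h' => hv h'.2
  · rintro ⟨hi, h⟩
    refine ⟨fun e he => ?_, h.mono (Finset.subset_insert _ _)⟩
    rcases Finset.mem_insert.1 he with rfl | he
    · rintro rfl
      exact hv h
    · exact hi e he

end Forests

/-! ### Summation over the out-forests in which a vertex is not a root -/

open scoped Classical in
/-- Every out-forest in which `j` is not a root arises uniquely from an out-forest `G` in which `j`
is a root by adding an arc `(q, j)` whose tail is not a descendant of `j`. -/
lemma sum_nonroot (W : Matrix (Fin n) (Fin n) ℝ) (hW0 : ∀ i j, 0 ≤ W i j) (k : ℕ) (j : Fin n)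
    (φ : Finset (Fin n × Fin n) → ℝ) :
    ∑ H ∈ outForests W (k + 1) with ¬ IsRoot H j, wt W H * φ H =
      ∑ G ∈ outForests W k with IsRoot G j, ∑ q with ¬ FReach G j q,
        wt W G * W q j * φ (insert (q, j) G) := by
  -- Pairs with `W q j = 0` are discarded, since then `(q, j)` is not an arc of the digraph.
  have hpos : ∀ G : Finset (Fin n × Fin n), ∑ q with ¬ FReach G j q,
        wt W G * W q j * φ (insert (q, j) G) =
      ∑ q with ¬ FReach G j q ∧ 0 < W q j, wt W G * W q j * φ (insert (q, j) G) := by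
    intro G
    rw [← Finset.filter_filter]
    refine (Finset.sum_filter_of_ne fun q _ hne => ?_).symm
    refine lt_of_le_of_ne (hW0 q j) fun h => hne ?_
    rw [← h]; ring
  simp_rw [hpos]
  rw [Finset.sum_sigma']
  symm
  have hnot : ∀ (G : Finset (Fin n × Fin n)) (q : Fin n), IsRoot G j → (q, j) ∉ G :=
    fun G q hG h => hG _ h rfl
  refine Finset.sum_bij (fun x _ => insert (x.2, j) x.1) ?_ ?_ ?_ ?_
  · rintro ⟨G, q⟩ hx
    simp only [outForests, Finset.mem_sigma, Finset.mem_filter, Finset.mem_univ, true_and] at hx ⊢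
    obtain ⟨⟨⟨hG, hc⟩, hj⟩, hq, hw⟩ := hx
    refine ⟨⟨hG.insert hj hq hw, ?_⟩, fun h => h _ (Finset.mem_insert_self _ _) rfl⟩
    rw [Finset.card_insert_of_notMem (hnot G q hj), hc]
  · rintro ⟨G, q⟩ hx ⟨G', q'⟩ hx' h
    simp only [Finset.mem_sigma, Finset.mem_filter] at hx hx' h
    have h1 := hnot G q hx.1.2
    have h2 := hnot G' q' hx'.1.2
    have hqq : q = q' := by
      have : (q, j) ∈ insert (q', j) G' := h ▸ Finset.mem_insert_self _ _
      rcases Finset.mem_insert.1 this with h' | h'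
      · exact congrArg Prod.fst h'
      · exact absurd h' (hnot G' q hx'.1.2)
    subst hqq
    have hGG : G = G' := by
      rw [← Finset.erase_insert h1, h, Finset.erase_insert h2]
    rw [hGG]
  · intro H hH
    simp only [outForests, Finset.mem_filter, Finset.mem_univ, true_and] at hH
    obtain ⟨⟨hH, hc⟩, hj⟩ := hH
    simp only [IsRoot, not_forall, not_not] at hj
    obtain ⟨⟨q, j'⟩, hmem, rfl⟩ := hj
    refine ⟨⟨H.erase (q, j'), q⟩, ?_, Finset.insert_erase hmem⟩
    simp only [outForests, Finset.mem_sigma, Finset.mem_filter, Finset.mem_univ, true_and]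
    refine ⟨⟨⟨hH.subset (Finset.erase_subset _ _), ?_⟩, ?_⟩, ?_, hH.1 _ hmem⟩
    · rw [Finset.card_erase_of_mem hmem, hc]; rfl
    · rintro ⟨a, b⟩ he rfl
      obtain ⟨hne, he⟩ := Finset.mem_erase.1 he
      exact hne (by rw [hH.parent_unique he hmem])
    · intro hr
      exact hH.2.2 _ (Relation.TransGen.tail' (hr.mono (Finset.erase_subset _ _)) hmem)
  · rintro ⟨G, q⟩ hx
    simp only [Finset.mem_sigma, Finset.mem_filter] at hx
    simp only [wt]
    rw [Finset.prod_insert (hnot G q hx.1.2)]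
    ring

/-! ### The recurrence for the forest matrices -/

open scoped Classical in
/-- The indicator that `v` belongs to the tree of `F` diverging from `i`. -/
noncomputable def ind (i : Fin n) (F : Finset (Fin n × Fin n)) (v : Fin n) : ℝ :=
  if inTreeOf F i v then 1 else 0

lemma ind_congr {i u v : Fin n} {F G : Finset (Fin n × Fin n)}
    (h : inTreeOf F i u ↔ inTreeOf G i v) : ind i F u = ind i G v := by
  unfold ind
  rw [propext h]

lemma Qmat_eq_sum (W : Matrix (Fin n) (Fin n) ℝ) (k : ℕ) (i v : Fin n) :
    Qmat W k i v = ∑ F ∈ outForests W k, wt W F * ind i F v := by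
  classical
  simp only [Qmat, wtSet, ind, Finset.sum_filter, mul_ite, mul_one, mul_zero]

lemma mul_Lap_apply (W Q : Matrix (Fin n) (Fin n) ℝ) (i j : Fin n) :
    (Q * Lap W) i j = ∑ p, W p j * (Q i j - Q i p) := by
  rw [Matrix.mul_apply, ← Finset.add_sum_erase _ _ (Finset.mem_univ j),
    ← Finset.add_sum_erase (a := j) (f := fun p => W p j * (Q i j - Q i p)) _
      (Finset.mem_univ j)]
  have h : ∀ p ∈ Finset.univ.erase j, Q i p * Lap W p j = - (W p j * Q i p) := by
    intro p hp
    simp only [Lap, if_neg (Finset.ne_of_mem_erase hp)]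
    ring
  rw [Finset.sum_congr rfl h]
  simp only [Lap, if_true, mul_sub, Finset.sum_sub_distrib, Finset.sum_neg_distrib,
    ← Finset.sum_mul]
  ring

open scoped Classical in
/-- The forests in which `j` is not a root contribute nothing to the `(i, j)` entry
of `Q_k L`. -/
lemma nonroot_part (W : Matrix (Fin n) (Fin n) ℝ) (hW0 : ∀ i j, 0 ≤ W i j) (k : ℕ)
    (i j : Fin n) :
    ∑ F ∈ outForests W k with ¬ IsRoot F j,
      wt W F * ∑ p, W p j * (ind i F j - ind i F p) = 0 := by
  cases k with
  | zero =>
    refine Finset.sum_eq_zero fun F hF => ?_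
    simp only [outForests, Finset.mem_filter, Finset.card_eq_zero] at hF
    obtain ⟨⟨_, _, rfl⟩, h⟩ := hF
    exact absurd (fun e he => by simp at he) h
  | succ k =>
    rw [sum_nonroot W hW0]
    refine Finset.sum_eq_zero fun G hG => ?_
    simp only [outForests, Finset.mem_filter, Finset.mem_univ, true_and] at hG
    obtain ⟨⟨hG, _⟩, hj⟩ := hG
    have key : ∀ q ∈ Finset.univ.filter (fun q => ¬ FReach G j q),
        wt W G * W q j * ∑ p, W p j * (ind i (insert (q, j) G) j - ind i (insert (q, j) G) p) =
        ∑ p with ¬ FReach G j p, wt W G * W q j * W p j * (ind i G q - ind i G p) := by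
      intro q hq
      have hq : ¬ FReach G j q := by simpa using hq
      rcases (hW0 q j).eq_or_lt with h0 | hpos
      · simp [← h0]
      have hH := hG.insert hj hq hpos
      have hjq : ind i (insert (q, j) G) j = ind i G q :=
        ind_congr ((hH.inTreeOf_arc (Finset.mem_insert_self _ _)).trans (inTreeOf_insert hq hq))
      rw [Finset.mul_sum, Finset.sum_filter]
      refine Finset.sum_congr rfl fun p _ => ?_
      split_ifs with hp
      · rw [ind_congr (hH.inTreeOf_reach (hp.mono (Finset.subset_insert _ _)))]
        ring
      · rw [hjq, ind_congr (inTreeOf_insert hq hp)]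
        ring
    rw [Finset.sum_congr rfl key]
    -- The double sum is antisymmetric under exchanging `p` and `q`.
    have hs : ∀ s : ℝ, s = -s → s = 0 := fun s h => by linarith
    apply hs
    conv_lhs => rw [Finset.sum_comm]
    simp only [← Finset.sum_neg_distrib]
    refine Finset.sum_congr rfl fun p _ => Finset.sum_congr rfl fun q _ => ?_
    ring

open scoped Classical in
/-- The contribution to the `(i, j)` entry of `Q_k L` of the forests in which `j` is a root. -/
lemma root_part (W : Matrix (Fin n) (Fin n) ℝ) (hW0 : ∀ i j, 0 ≤ W i j) (k : ℕ)
    (i j : Fin n) :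
    ∑ F ∈ outForests W k with IsRoot F j,
      wt W F * ∑ p, W p j * (ind i F j - ind i F p) =
    ∑ H ∈ outForests W (k + 1), wt W H * ((if i = j then 1 else 0) - ind i H j) := by
  have hroot : ∀ F : Finset (Fin n × Fin n), IsRoot F j →
      ind i F j = if i = j then 1 else 0 := by
    intro F hF
    simp only [ind, inTreeOf_of_isRoot hF]
  have hz : ∑ H ∈ outForests W (k + 1) with IsRoot H j,
      wt W H * ((if i = j then 1 else 0) - ind i H j) = 0 := by
    refine Finset.sum_eq_zero fun H hH => ?_
    rw [hroot H (Finset.mem_filter.1 hH).2]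
    ring
  rw [← Finset.sum_filter_add_sum_filter_not (outForests W (k + 1)) (fun H => IsRoot H j), hz,
    zero_add, sum_nonroot W hW0]
  refine Finset.sum_congr rfl fun G hG => ?_
  simp only [outForests, Finset.mem_filter, Finset.mem_univ, true_and] at hG
  obtain ⟨⟨hG, _⟩, hj⟩ := hG
  rw [Finset.mul_sum, Finset.sum_filter]
  refine Finset.sum_congr rfl fun p _ => ?_
  rcases (hW0 p j).eq_or_lt with h0 | hpos
  · simp [← h0]
  by_cases hp : FReach G j p
  · rw [if_neg (not_not.2 hp), ind_congr (hG.inTreeOf_reach hp)]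
    ring
  · have hH := hG.insert hj hp hpos
    rw [if_pos hp, hroot G hj, ind_congr
      ((hH.inTreeOf_arc (Finset.mem_insert_self _ _)).trans (inTreeOf_insert hp hp))]
    ring

/-- The recurrence `Q_{k+1} + Q_k L = σ_{k+1} I`. -/
lemma Qmat_succ (W : Matrix (Fin n) (Fin n) ℝ) (hW0 : ∀ i j, 0 ≤ W i j) (k : ℕ) :
    Qmat W (k + 1) = sigma W (k + 1) • (1 : Matrix (Fin n) (Fin n) ℝ) - Qmat W k * Lap W := by
  classical
  ext i j
  have h : (Qmat W k * Lap W) i j =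
      ∑ F ∈ outForests W k, wt W F * ∑ p, W p j * (ind i F j - ind i F p) := by
    rw [mul_Lap_apply]
    simp only [Qmat_eq_sum, ← Finset.sum_sub_distrib, Finset.mul_sum]
    rw [Finset.sum_comm]
    refine Finset.sum_congr rfl fun F _ => Finset.sum_congr rfl fun p _ => ?_
    ring
  rw [Matrix.sub_apply, h,
    ← Finset.sum_filter_add_sum_filter_not (outForests W k) (fun F => IsRoot F j),
    nonroot_part W hW0, root_part W hW0, Qmat_eq_sum]
  simp only [mul_sub, Finset.sum_sub_distrib, ← Finset.sum_mul, Matrix.smul_apply,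
    Matrix.one_apply, smul_eq_mul, sigma, wtSet]
  ring

/-! ### Commutation with the Laplacian -/

lemma Qmat_zero (W : Matrix (Fin n) (Fin n) ℝ) : Qmat W 0 = 1 := by
  classical
  have h0 : outForests W 0 = {∅} := by
    ext F
    simp only [outForests, Finset.mem_filter, Finset.mem_univ, true_and, Finset.card_eq_zero,
      Finset.mem_singleton]
    refine ⟨fun h => h.2, ?_⟩
    rintro rfl
    refine ⟨⟨by simp, by simp, fun v hv => ?_⟩, rfl⟩
    obtain ⟨c, _, hc⟩ := Relation.TransGen.tail'_iff.1 hv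
    simp at hc
  ext i j
  have hj : IsRoot (∅ : Finset (Fin n × Fin n)) j := fun e he => by simp at he
  rw [Qmat_eq_sum, h0, Finset.sum_singleton]
  simp [wt, ind, inTreeOf_of_isRoot hj, Matrix.one_apply]

lemma Qmat_commute (W : Matrix (Fin n) (Fin n) ℝ) (hW0 : ∀ i j, 0 ≤ W i j) (k : ℕ) :
    Commute (Lap W) (Qmat W k) := by
  induction k with
  | zero => rw [Qmat_zero]; exact Commute.one_right _
  | succ k ih =>
    rw [Qmat_succ W hW0]
    exact ((Commute.one_right _).smul_right _).sub_right (ih.mul_right (Commute.refl _))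

lemma outForests_maxArcs_succ (W : Matrix (Fin n) (Fin n) ℝ) :
    outForests W (maxArcs W + 1) = ∅ := by
  classical
  refine Finset.eq_empty_of_forall_notMem fun F hF => ?_
  simp only [outForests, Finset.mem_filter, Finset.mem_univ, true_and] at hF
  have h : F.card ≤ maxArcs W :=
    Finset.le_sup (f := Finset.card) (by simpa [allOutForests] using hF.1)
  omega

/-- The normalized matrix of maximum out-forests annihilates the
Laplacian matrix on both sides: `L J̃ = J̃ L = 0`. -/
theorem Lap_Jtil_eq_zero (n : ℕ) (hn : 1 < n)
    (W : Matrix (Fin n) (Fin n) ℝ)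
    (hW0 : ∀ i j, 0 ≤ W i j) (hWd : ∀ i, W i i = 0) :
    Lap W * Jtil W = 0 ∧ Jtil W * Lap W = 0 := by
  have hQ : Qmat W (maxArcs W) * Lap W = 0 := by
    have h := Qmat_succ W hW0 (maxArcs W)
    have hs : sigma W (maxArcs W + 1) = 0 := by
      simp [sigma, wtSet, outForests_maxArcs_succ]
    have hq : Qmat W (maxArcs W + 1) = 0 := by
      ext i j
      simp [Qmat_eq_sum, outForests_maxArcs_succ]
    rw [hs, hq, zero_smul, zero_sub] at h
    exact neg_eq_zero.1 h.symm
  constructor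
  · rw [Jtil, Matrix.mul_smul, (Qmat_commute W hW0 _).eq, hQ, smul_zero]
  · rw [Jtil, Matrix.smul_mul, hQ, smul_zero]

end ForestMatrix
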